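/- With the notation of the Poisson problem −ΔU = ∂_k∂_i∂_j h for h ∈ L¹(ℝ^d, (1+|x|)^{-(d+1)} dx), the solution U = (∂_k ∂_i∂_j G_d) * h (defined via the cutoff decomposition) satisfies the heat-semigroup estimate |e^{τΔ}U(x)| ≤ C ∫ (√τ + |x−y|)^{-(d+1)} |h(y)| dy for all τ > 0, and consequently e^{τΔ}U → 0 in L¹(ℝ^d, (1+|x|)^{-(d+1)} dx) as τ → ∞. -/

import Mathlib

open MeasureTheory Real Filter

noncomputable section

variable {d : ℕ}

/-- Partial derivative in the `i`-th coordinate direction on `ℝ^d`. -/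
def pd (i : Fin d) (f : EuclideanSpace ℝ (Fin d) → ℝ) :
    EuclideanSpace ℝ (Fin d) → ℝ :=
  fun x => fderiv ℝ f x (EuclideanSpace.single i 1)

/-- The heat kernel on `ℝ^d`. -/
def heatW (d : ℕ) (t : ℝ) (x : EuclideanSpace ℝ (Fin d)) : ℝ :=
  (4 * Real.pi * t) ^ (-(d : ℝ) / 2) * Real.exp (-‖x‖ ^ (2 : ℕ) / (4 * t))

/-- The kernel `e^{τΔ}∂ₖ∂ᵢ∂ⱼG_d = ∫_τ^∞ ∂ₖ∂ᵢ∂ⱼ W_t dt`. -/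
def heatKer (d : ℕ) (i j k : Fin d) (τ : ℝ) (x : EuclideanSpace ℝ (Fin d)) : ℝ :=
  ∫ t in Set.Ioi τ, pd k (pd i (pd j (heatW d t))) x

lemma h13_hasFDeriv (d : ℕ) (t : ℝ) (x : EuclideanSpace ℝ (Fin d)) :
    HasFDerivAt (heatW d t) ((-(1 / (2 * t)) * heatW d t x) • (innerSL ℝ x)) x := by
  have h1 : HasFDerivAt (fun x : EuclideanSpace ℝ (Fin d) => ‖x‖ ^ (2:ℕ)) (2 • (innerSL ℝ x)) x :=
    (hasStrictFDerivAt_norm_sq x).hasFDerivAt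
  have h2 := (((h1.neg).mul_const (1 / (4 * t))).exp).const_mul ((4 * Real.pi * t) ^ (-(d : ℝ) / 2))
  have h3 : heatW d t = fun y => (4 * Real.pi * t) ^ (-(d : ℝ) / 2) *
      Real.exp (-‖y‖ ^ (2 : ℕ) * (1 / (4 * t))) := by
    funext y; unfold heatW; rw [mul_one_div]
  rw [h3]
  refine h2.congr_fderiv ?_
  ext v
  simp
  ring

lemma h13_pd_W (d : ℕ) (t : ℝ) (j : Fin d) (x : EuclideanSpace ℝ (Fin d)) :
    fderiv ℝ (heatW d t) x (EuclideanSpace.single j 1) = -(1 / (2 * t)) * heatW d t x * x j := by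
  rw [(h13_hasFDeriv d t x).fderiv]
  simp [EuclideanSpace.inner_single_right]

lemma h13_coord (d : ℕ) (i j : Fin d) (x : EuclideanSpace ℝ (Fin d)) :
    DifferentiableAt ℝ (fun x : EuclideanSpace ℝ (Fin d) => x j) x ∧
    fderiv ℝ (fun x : EuclideanSpace ℝ (Fin d) => x j) x (EuclideanSpace.single i 1)
      = if j = i then 1 else 0 := by
  have h : HasFDerivAt (fun x : EuclideanSpace ℝ (Fin d) => x j)
    (EuclideanSpace.proj j : EuclideanSpace ℝ (Fin d) →L[ℝ] ℝ) x :=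
    (EuclideanSpace.proj j : EuclideanSpace ℝ (Fin d) →L[ℝ] ℝ).hasFDerivAt
  refine ⟨h.differentiableAt, ?_⟩
  rw [h.fderiv]
  simp [Pi.single_apply]

lemma h13_pd_mul (d : ℕ) (i : Fin d) (f g : EuclideanSpace ℝ (Fin d) → ℝ)
    (x : EuclideanSpace ℝ (Fin d)) (hf : DifferentiableAt ℝ f x) (hg : DifferentiableAt ℝ g x) :
    pd i (fun y => f y * g y) x = f x * pd i g x + g x * pd i f x := by
  unfold pd
  rw [fderiv_fun_mul hf hg]; simp

lemma h13_third (d : ℕ) (t : ℝ) (i j k : Fin d) (x : EuclideanSpace ℝ (Fin d)) :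
    pd k (pd i (pd j (heatW d t))) x =
      (-(1 / (2 * t)) ^ 3 * (x i * x j * x k) + (1 / (2 * t)) ^ 2 *
        ((if j = k then 1 else 0) * x i + (if i = k then 1 else 0) * x j
          + (if j = i then 1 else 0) * x k)) * heatW d t x := by
  have hW : ∀ y, DifferentiableAt ℝ (heatW d t) y := fun y => (h13_hasFDeriv d t y).differentiableAt
  have hc : ∀ (l : Fin d) y, DifferentiableAt ℝ (fun x : EuclideanSpace ℝ (Fin d) => x l) y :=
    fun l y => (h13_coord d l l y).1
  have hpc : ∀ (l m : Fin d) y, pd l (fun x : EuclideanSpace ℝ (Fin d) => x m) y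
      = if m = l then 1 else 0 := fun l m y => (h13_coord d l m y).2
  have hpW : ∀ (l : Fin d) y, pd l (heatW d t) y = -(1 / (2 * t)) * heatW d t y * y l :=
    fun l y => h13_pd_W d t l y
  have hcst : ∀ (l : Fin d) (c : ℝ) y, pd l (fun _ => c) y = 0 := by
    intro l c y; simp [pd]
  have e1 : pd j (heatW d t) = fun y => (-(1 / (2 * t)) * y j) * heatW d t y := by
    funext y; rw [hpW]; ring
  have e2 : pd i (pd j (heatW d t)) = fun y =>
      ((1 / (2 * t)) ^ 2 * (y i * y j) + (-(1 / (2 * t)) * (if j = i then 1 else 0)))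
        * heatW d t y := by
    funext y
    rw [e1, h13_pd_mul d i _ _ y ((hc j y).const_mul _) (hW y),
      h13_pd_mul d i _ _ y (differentiableAt_const _) (hc j y), hpW, hpc, hcst]
    ring
  have e3 : pd k (fun y : EuclideanSpace ℝ (Fin d) =>
      ((1 / (2 * t)) ^ 2 * (y i * y j) + (-(1 / (2 * t)) * (if j = i then 1 else 0)))) x
      = (1 / (2 * t)) ^ 2 * (x i * (if j = k then 1 else 0) + x j * (if i = k then 1 else 0)) := by
    have : pd k (fun y : EuclideanSpace ℝ (Fin d) =>
      ((1 / (2 * t)) ^ 2 * (y i * y j) + (-(1 / (2 * t)) * (if j = i then 1 else 0)))) x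
      = pd k (fun y : EuclideanSpace ℝ (Fin d) => ((1 / (2 * t)) ^ 2 * (y i * y j))) x := by
      unfold pd; rw [fderiv_add_const]
    rw [this, h13_pd_mul d k _ _ x (differentiableAt_const _) ((hc i x).fun_mul (hc j x)),
      h13_pd_mul d k _ _ x (hc i x) (hc j x), hpc, hpc, hcst]
    ring
  rw [e2, h13_pd_mul d k _ _ x ((((hc i x).fun_mul (hc j x)).const_mul _).add_const _) (hW x), hpW, e3]
  ring

lemma h13_polyexp (n : ℕ) (s : ℝ) (hs : 0 ≤ s) :
    (1 + s) ^ n * Real.exp (-s ^ 2 / 4) ≤ n.factorial * Real.exp 2 := by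
  have h1 := Real.pow_div_factorial_le_exp (1 + s) (by positivity) n
  rw [div_le_iff₀ (by positivity)] at h1
  have h2 : Real.exp (-s ^ 2 / 4) ≤ Real.exp (2 - (1 + s)) := by
    apply Real.exp_le_exp.2; nlinarith [sq_nonneg (s - 2)]
  calc _ ≤ (Real.exp (1 + s) * n.factorial) * Real.exp (2 - (1 + s)) := by gcongr
    _ = n.factorial * (Real.exp (1 + s) * Real.exp (2 - (1 + s))) := by ring
    _ = _ := by rw [← Real.exp_add]; congr 2; ring

lemma h13_third_bound (d : ℕ) : ∃ A : ℝ, 0 < A ∧ ∀ (i j k : Fin d) (t : ℝ), 0 < t →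
    ∀ x : EuclideanSpace ℝ (Fin d),
    |pd k (pd i (pd j (heatW d t))) x| ≤
      A * ((Real.sqrt t)⁻¹ * (Real.sqrt t + ‖x‖) ^ (-((d : ℝ) + 2))) := by
  refine ⟨(4 * Real.pi) ^ (-(d : ℝ) / 2) * ((d + 5).factorial * Real.exp 2), by positivity, ?_⟩
  intro i j k t ht x
  rw [h13_third]
  set u := Real.sqrt t with hu
  have hu0 : 0 < u := Real.sqrt_pos.2 ht
  have htu : t = u ^ 2 := (Real.sq_sqrt ht.le).symm
  set s := ‖x‖ / u with hs
  have hs0 : 0 ≤ s := by positivity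
  have hxs : ‖x‖ = s * u := by rw [hs]; field_simp
  have hco : ∀ l : Fin d, |x l| ≤ s * u := by
    intro l; rw [← hxs]; exact PiLp.norm_apply_le x l
  have hWe : heatW d t x = (4 * Real.pi) ^ (-(d : ℝ) / 2) * (u ^ d)⁻¹ * Real.exp (-s ^ 2 / 4) := by
    unfold heatW
    rw [Real.mul_rpow (by positivity) ht.le]
    congr 1
    · congr 1
      rw [hu, Real.sqrt_eq_rpow, ← Real.rpow_natCast, ← Real.rpow_mul ht.le, ← Real.rpow_neg ht.le]
      congr 1; ring
    · congr 1
      rw [hxs, htu]; field_simp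
  have hrp : (u + ‖x‖) ^ (-((d : ℝ) + 2)) = ((1 + s) ^ (d + 2))⁻¹ * (u ^ (d + 2))⁻¹ := by
    have : u + ‖x‖ = (1 + s) * u := by rw [hxs]; ring
    rw [this, Real.rpow_neg (by positivity), ← mul_inv, ← mul_pow, ← Real.rpow_natCast]
    push_cast; rfl
  have hpoly : |(-(1 / (2 * t)) ^ 3 * (x i * x j * x k) + (1 / (2 * t)) ^ 2 *
        ((if j = k then 1 else 0) * x i + (if i = k then 1 else 0) * x j
          + (if j = i then 1 else 0) * x k))| ≤ (1 + s) ^ 3 * (u ^ 3)⁻¹ := by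
    have hd : ∀ (P : Prop) [Decidable P] (l : Fin d),
        |(if P then (1:ℝ) else 0) * x l| ≤ s * u := by
      intro P _ l
      split_ifs
      · simpa using hco l
      · simp; positivity
    have h1 : |x i * x j * x k| ≤ (s * u) ^ 3 := by
      rw [abs_mul, abs_mul, show (s * u) ^ 3 = (s * u) * (s * u) * (s * u) by ring]
      gcongr <;> apply hco
    have h2 : |(if j = k then 1 else 0) * x i + (if i = k then 1 else 0) * x j
          + (if j = i then 1 else 0) * x k| ≤ 3 * (s * u) := by
      have a := hd (j = k) i
      have b := hd (i = k) j
      have c := hd (j = i) k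
      have := abs_add_three ((if j = k then (1:ℝ) else 0) * x i) ((if i = k then 1 else 0) * x j)
        ((if j = i then 1 else 0) * x k)
      linarith
    calc _ ≤ |(-(1 / (2 * t)) ^ 3 * (x i * x j * x k))| + |(1 / (2 * t)) ^ 2 *
        ((if j = k then 1 else 0) * x i + (if i = k then 1 else 0) * x j
          + (if j = i then 1 else 0) * x k)| := abs_add_le _ _
      _ = (1 / (2 * t)) ^ 3 * |x i * x j * x k| + (1 / (2 * t)) ^ 2 *
        |(if j = k then 1 else 0) * x i + (if i = k then 1 else 0) * x j
          + (if j = i then 1 else 0) * x k| := by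
        rw [abs_mul (-(1 / (2 * t)) ^ 3), abs_mul ((1 / (2 * t)) ^ 2), abs_neg,
          abs_of_nonneg (by positivity : 0 ≤ (1 / (2 * t)) ^ 3),
          abs_of_nonneg (by positivity : 0 ≤ (1 / (2 * t)) ^ 2)]
      _ ≤ (1 / (2 * t)) ^ 3 * (s * u) ^ 3 + (1 / (2 * t)) ^ 2 * (3 * (s * u)) := by gcongr
      _ = (s ^ 3 / 8 + 3 * s / 4) * (u ^ 3)⁻¹ := by rw [htu]; field_simp; ring
      _ ≤ _ := by
        gcongr
        nlinarith [pow_nonneg hs0 3, pow_nonneg hs0 2]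
  rw [abs_mul, hWe, hrp, abs_of_nonneg (by positivity :
    0 ≤ (4 * Real.pi) ^ (-(d : ℝ) / 2) * (u ^ d)⁻¹ * Real.exp (-s ^ 2 / 4))]
  have hpe := h13_polyexp (d + 5) s hs0
  calc _ ≤ (1 + s) ^ 3 * (u ^ 3)⁻¹ *
        ((4 * Real.pi) ^ (-(d : ℝ) / 2) * (u ^ d)⁻¹ * Real.exp (-s ^ 2 / 4)) := by gcongr
    _ = (4 * Real.pi) ^ (-(d : ℝ) / 2) * ((1 + s) ^ (d + 5) * Real.exp (-s ^ 2 / 4)) *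
        (u⁻¹ * (((1 + s) ^ (d + 2))⁻¹ * (u ^ (d + 2))⁻¹)) := by
      have : 0 < 1 + s := by positivity
      field_simp
      ring
    _ ≤ _ := by gcongr

lemma h13_ker_bound (d : ℕ) : ∃ C : ℝ, 0 < C ∧ ∀ (i j k : Fin d) (τ : ℝ), 0 < τ →
    ∀ x : EuclideanSpace ℝ (Fin d),
    |heatKer d i j k τ x| ≤ C * (Real.sqrt τ + ‖x‖) ^ (-((d : ℝ) + 1)) := by
  obtain ⟨A, hA, hb⟩ := h13_third_bound d
  have hd1 : (0:ℝ) < d + 1 := by positivity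
  refine ⟨A * (2 / (d + 1)), by positivity, ?_⟩
  intro i j k τ hτ x
  set r := ‖x‖ with hr
  have hr0 : 0 ≤ r := norm_nonneg x
  let g : ℝ → ℝ := fun t => -(2 / ((d:ℝ) + 1)) * (Real.sqrt t + r) ^ (-((d : ℝ) + 1))
  let g' : ℝ → ℝ := fun t => (Real.sqrt t)⁻¹ * (Real.sqrt t + r) ^ (-((d : ℝ) + 2))
  have hder : ∀ t ∈ Set.Ici τ, HasDerivAt g (g' t) t := by
    intro t ht
    have ht0 : 0 < t := lt_of_lt_of_le hτ ht
    have hs : 0 < Real.sqrt t := Real.sqrt_pos.2 ht0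
    have h1 := (((Real.hasDerivAt_sqrt ht0.ne').add_const r).rpow_const
      (p := -((d : ℝ) + 1)) (Or.inl (by positivity))).const_mul (-(2 / ((d:ℝ) + 1)))
    refine h1.congr_deriv ?_
    simp only [g']
    rw [show -((d : ℝ) + 1) - 1 = -((d:ℝ) + 2) by ring]
    field_simp
  have hlim : Tendsto g atTop (nhds 0) := by
    have h1 : Tendsto (fun t => Real.sqrt t + r) atTop atTop :=
      tendsto_atTop_add_const_right _ _ Real.tendsto_sqrt_atTop
    have := ((tendsto_rpow_neg_atTop hd1).comp h1).const_mul (-(2 / ((d:ℝ) + 1)))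
    rw [mul_zero] at this
    exact this
  have hpos : ∀ t ∈ Set.Ioi τ, 0 ≤ g' t := by
    intro t ht
    simp only [g']; positivity
  have hI := integrableOn_Ioi_deriv_of_nonneg' hder hpos hlim
  have hv := integral_Ioi_of_hasDerivAt_of_nonneg' hder hpos hlim
  have : ‖heatKer d i j k τ x‖ ≤ ∫ t in Set.Ioi τ, A * g' t := by
    unfold heatKer
    refine norm_integral_le_of_norm_le (hI.const_mul A) ?_
    refine (ae_restrict_iff' measurableSet_Ioi).2 (Eventually.of_forall ?_)
    intro t ht
    exact hb i j k t (lt_trans hτ ht) x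
  rw [integral_const_mul, hv] at this
  rw [← Real.norm_eq_abs]
  refine this.trans (le_of_eq ?_)
  simp only [g]
  ring

lemma h13_rp_le {p a u v : ℝ} (hp : 0 ≤ p) (ha : 0 < a) (hu : 0 < u) (hv : 0 < v)
    (h : u ≤ a * v) : v ^ (-p) ≤ a ^ p * u ^ (-p) := by
  rw [Real.rpow_neg hv.le, Real.rpow_neg hu.le, ← div_eq_mul_inv, ← one_div,
    div_le_div_iff₀ (by positivity) (by positivity), one_mul, ← Real.mul_rpow ha.le hv.le]
  exact Real.rpow_le_rpow hu.le h hp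

lemma h13_int1 (d : ℕ) (h : EuclideanSpace ℝ (Fin d) → ℝ) (hmeas : Measurable h)
    (hint : Integrable (fun y : EuclideanSpace ℝ (Fin d) =>
      |h y| * (1 + ‖y‖) ^ (-((d : ℝ) + 1)))) (τ : ℝ) (hτ : 0 < τ) (x : EuclideanSpace ℝ (Fin d)) :
    Integrable (fun y : EuclideanSpace ℝ (Fin d) =>
      (Real.sqrt τ + ‖x - y‖) ^ (-((d : ℝ) + 1)) * |h y|) := by
  have hs : 0 < Real.sqrt τ := Real.sqrt_pos.2 hτ
  refine (hint.const_mul (((1 + ‖x‖) / Real.sqrt τ + 1) ^ ((d : ℝ) + 1))).mono'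
    (by fun_prop) (Eventually.of_forall ?_)
  intro y
  rw [Real.norm_of_nonneg (by positivity)]
  have := h13_rp_le (p := (d:ℝ) + 1) (a := (1 + ‖x‖) / Real.sqrt τ + 1) (u := 1 + ‖y‖)
    (v := Real.sqrt τ + ‖x - y‖) (by positivity) (by positivity) (by positivity) (by positivity) (by
      have h1 : ‖y‖ ≤ ‖x‖ + ‖x - y‖ := by
        have := norm_sub_le x (x - y); simpa using this
      have h2 : ((1 + ‖x‖) / Real.sqrt τ + 1) * (Real.sqrt τ + ‖x - y‖) =
        (1 + ‖x‖) + ‖x - y‖ + ((1 + ‖x‖) / Real.sqrt τ * ‖x - y‖ + Real.sqrt τ) := by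
        field_simp; ring
      have : 0 ≤ (1 + ‖x‖) / Real.sqrt τ * ‖x - y‖ + Real.sqrt τ := by positivity
      linarith)
  calc _ ≤ (((1 + ‖x‖) / Real.sqrt τ + 1) ^ ((d : ℝ) + 1) * (1 + ‖y‖) ^ (-((d:ℝ) + 1))) * |h y| := by
        gcongr
    _ = _ := by ring

lemma h13_dom (p : ℝ) (hp : 0 ≤ p) (σ a b c : ℝ) (hσ : 1 ≤ σ) (ha : 0 ≤ a) (hb : 0 ≤ b)
    (hc : 0 ≤ c) (h : c ≤ a + b) :
    (σ + a) ^ (-p) * (1 + b) ^ (-p) ≤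
      2 ^ p * ((1 + a) ^ (-p) * (1 + c) ^ (-p) + (1 + b) ^ (-p) * (1 + c) ^ (-p)) := by
  have h0 : (σ + a) ^ (-p) ≤ (1 + a) ^ (-p) :=
    Real.rpow_le_rpow_of_nonpos (by positivity) (by linarith) (by linarith)
  have A : 0 ≤ (1 + a) ^ (-p) := by positivity
  have B : 0 ≤ (1 + b) ^ (-p) := by positivity
  have C : 0 ≤ (1 + c) ^ (-p) := by positivity
  have T : (0:ℝ) ≤ 2 ^ p := by positivity
  have hm : (σ + a) ^ (-p) * (1 + b) ^ (-p) ≤ (1 + a) ^ (-p) * (1 + b) ^ (-p) := by gcongr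
  refine hm.trans ?_
  rcases le_total a b with hab | hab
  · have := h13_rp_le (p := p) (a := 2) (u := 1 + c) (v := 1 + b) hp (by norm_num)
      (by positivity) (by positivity) (by linarith)
    calc _ ≤ (1 + a) ^ (-p) * (2 ^ p * (1 + c) ^ (-p)) := by gcongr
      _ = 2 ^ p * ((1 + a) ^ (-p) * (1 + c) ^ (-p) + 0) := by ring
      _ ≤ _ := by gcongr; positivity
  · have := h13_rp_le (p := p) (a := 2) (u := 1 + c) (v := 1 + a) hp (by norm_num)
      (by positivity) (by positivity) (by linarith)
    calc _ ≤ (2 ^ p * (1 + c) ^ (-p)) * (1 + b) ^ (-p) := by gcongr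
      _ = 2 ^ p * (0 + (1 + b) ^ (-p) * (1 + c) ^ (-p)) := by ring
      _ ≤ _ := by gcongr; positivity

lemma h13_limit (d : ℕ) (h : EuclideanSpace ℝ (Fin d) → ℝ) (hmeas : Measurable h)
    (hint : Integrable (fun y : EuclideanSpace ℝ (Fin d) =>
      |h y| * (1 + ‖y‖) ^ (-((d : ℝ) + 1)))) :
    (∀ τ : ℝ, 1 ≤ τ → Integrable (fun z : EuclideanSpace ℝ (Fin d) × EuclideanSpace ℝ (Fin d) =>
      (Real.sqrt τ + ‖z.1 - z.2‖) ^ (-((d : ℝ) + 1)) * (1 + ‖z.1‖) ^ (-((d : ℝ) + 1)) * |h z.2|)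
      (volume.prod volume)) ∧
    Tendsto (fun τ : ℝ => ∫ z : EuclideanSpace ℝ (Fin d) × EuclideanSpace ℝ (Fin d),
      (Real.sqrt τ + ‖z.1 - z.2‖) ^ (-((d : ℝ) + 1)) * (1 + ‖z.1‖) ^ (-((d : ℝ) + 1)) * |h z.2|
      ∂(volume.prod volume)) atTop (nhds 0) := by
  have hw : Integrable (fun x : EuclideanSpace ℝ (Fin d) => (1 + ‖x‖) ^ (-((d : ℝ) + 1))) :=
    integrable_one_add_norm (by simp)
  let D : EuclideanSpace ℝ (Fin d) × EuclideanSpace ℝ (Fin d) → ℝ := fun z =>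
    2 ^ ((d:ℝ) + 1) * ((|h z.2| * (1 + ‖z.2‖) ^ (-((d : ℝ) + 1))) *
        (1 + ‖z.1 - z.2‖) ^ (-((d : ℝ) + 1)) +
      (1 + ‖z.1‖) ^ (-((d : ℝ) + 1)) * (|h z.2| * (1 + ‖z.2‖) ^ (-((d : ℝ) + 1))))
  have hD : Integrable D (volume.prod volume) := by
    refine Integrable.const_mul (Integrable.add ?_ (hw.mul_prod hint)) _
    exact hint.convolution_integrand (ContinuousLinearMap.mul ℝ ℝ) hw
  have hm : ∀ τ : ℝ, AEStronglyMeasurable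
      (fun z : EuclideanSpace ℝ (Fin d) × EuclideanSpace ℝ (Fin d) =>
      (Real.sqrt τ + ‖z.1 - z.2‖) ^ (-((d : ℝ) + 1)) * (1 + ‖z.1‖) ^ (-((d : ℝ) + 1)) * |h z.2|)
      (volume.prod volume) := by
    intro τ
    apply Measurable.aestronglyMeasurable
    fun_prop
  have hb : ∀ τ : ℝ, 1 ≤ τ → ∀ z : EuclideanSpace ℝ (Fin d) × EuclideanSpace ℝ (Fin d),
      ‖(Real.sqrt τ + ‖z.1 - z.2‖) ^ (-((d : ℝ) + 1)) * (1 + ‖z.1‖) ^ (-((d : ℝ) + 1)) * |h z.2|‖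
        ≤ D z := by
    intro τ hτ z
    rw [Real.norm_of_nonneg (by positivity)]
    have := h13_dom ((d:ℝ) + 1) (by positivity) (Real.sqrt τ) ‖z.1 - z.2‖ ‖z.1‖ ‖z.2‖
      (Real.one_le_sqrt.2 hτ) (norm_nonneg _) (norm_nonneg _) (norm_nonneg _) (by
        have := norm_sub_le z.1 (z.1 - z.2)
        rw [sub_sub_cancel] at this; linarith)
    have h2 := mul_le_mul_of_nonneg_right this (abs_nonneg (h z.2))
    refine h2.trans (le_of_eq ?_)
    simp only [D]; ring
  refine ⟨fun τ hτ => hD.mono' (hm τ) (Eventually.of_forall (hb τ hτ)), ?_⟩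
  have := tendsto_integral_filter_of_dominated_convergence (l := atTop)
    (F := fun (τ : ℝ) (z : EuclideanSpace ℝ (Fin d) × EuclideanSpace ℝ (Fin d)) =>
      (Real.sqrt τ + ‖z.1 - z.2‖) ^ (-((d : ℝ) + 1)) * (1 + ‖z.1‖) ^ (-((d : ℝ) + 1)) * |h z.2|)
    (f := fun _ => (0:ℝ)) (μ := volume.prod volume) D
    (Eventually.of_forall hm)
    ((eventually_ge_atTop 1).mono fun τ hτ => Eventually.of_forall (hb τ hτ)) hD
    (Eventually.of_forall fun z => by
      have h1 : Tendsto (fun t => Real.sqrt t + ‖z.1 - z.2‖) atTop atTop :=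
        tendsto_atTop_add_const_right _ _ Real.tendsto_sqrt_atTop
      have := (((tendsto_rpow_neg_atTop (by positivity : (0:ℝ) < (d:ℝ) + 1)).comp h1).mul_const
        ((1 + ‖z.1‖) ^ (-((d : ℝ) + 1)))).mul_const |h z.2|
      simpa using this)
  simpa using this

theorem stmt_13 (d : ℕ) (hd : d = 2 ∨ d = 3) (i j k : Fin d)
    (h : EuclideanSpace ℝ (Fin d) → ℝ) (hmeas : Measurable h)
    (hint : Integrable (fun y : EuclideanSpace ℝ (Fin d) =>
      |h y| * (1 + ‖y‖) ^ (-((d : ℝ) + 1)))) :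
    (∃ C : ℝ, 0 < C ∧ ∀ τ : ℝ, 0 < τ → ∀ x : EuclideanSpace ℝ (Fin d),
      |∫ y : EuclideanSpace ℝ (Fin d), heatKer d i j k τ (x - y) * h y|
        ≤ C * ∫ y : EuclideanSpace ℝ (Fin d),
            (Real.sqrt τ + ‖x - y‖) ^ (-((d : ℝ) + 1)) * |h y|) ∧
    Tendsto (fun τ : ℝ =>
        ∫ x : EuclideanSpace ℝ (Fin d),
          |∫ y : EuclideanSpace ℝ (Fin d), heatKer d i j k τ (x - y) * h y|
            * (1 + ‖x‖) ^ (-((d : ℝ) + 1)))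
      atTop (nhds 0) := by
  obtain ⟨C, hC, hker⟩ := h13_ker_bound d
  have part1 : ∀ τ : ℝ, 0 < τ → ∀ x : EuclideanSpace ℝ (Fin d),
      |∫ y : EuclideanSpace ℝ (Fin d), heatKer d i j k τ (x - y) * h y|
        ≤ C * ∫ y : EuclideanSpace ℝ (Fin d),
            (Real.sqrt τ + ‖x - y‖) ^ (-((d : ℝ) + 1)) * |h y| := by
    intro τ hτ x
    rw [← integral_const_mul, ← Real.norm_eq_abs]
    refine norm_integral_le_of_norm_le ((h13_int1 d h hmeas hint τ hτ x).const_mul C)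
      (Eventually.of_forall fun y => ?_)
    rw [norm_mul, Real.norm_eq_abs, Real.norm_eq_abs, ← mul_assoc]
    exact mul_le_mul_of_nonneg_right (hker i j k τ hτ (x - y)) (abs_nonneg _)
  refine ⟨⟨C, hC, part1⟩, ?_⟩
  obtain ⟨hI, hT⟩ := h13_limit d h hmeas hint
  have hT' := hT.const_mul C
  rw [mul_zero] at hT'
  refine tendsto_of_tendsto_of_tendsto_of_le_of_le' tendsto_const_nhds hT'
    (Eventually.of_forall fun τ => integral_nonneg fun x => by positivity) ?_
  filter_upwards [eventually_ge_atTop 1] with τ hτ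
  have hτ0 : 0 < τ := by linarith
  rw [integral_prod _ (hI τ hτ), ← integral_const_mul]
  refine integral_mono_of_nonneg (Eventually.of_forall fun x => by positivity)
    ((hI τ hτ).integral_prod_left.const_mul C) (Eventually.of_forall fun x => ?_)
  have := mul_le_mul_of_nonneg_right (part1 τ hτ0 x)
    (by positivity : 0 ≤ (1 + ‖x‖) ^ (-((d : ℝ) + 1)))
  refine this.trans (le_of_eq ?_)
  simp only
  rw [mul_assoc, ← integral_mul_const]
  congr 2
  funext y
  ring
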